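/- Let p: A → B be a surjective homomorphism of MV-algebras admitting a homomorphism section s: B → A with p∘s = id_B, and let g: C → B be any homomorphism. Let A×_B C := {(a,c) ∈ A×C : p(a)=g(c)}. Then the canonical homomorphism φ: S(A×_B C) → {(u,v) ∈ S(A)×S(C) : S(p)(u)=S(g)(v)} sending the class of (a,c) to ([a],[c]) is an isomorphism. Hence the semisimplification functor S preserves pullbacks along split epimorphisms, i.e. S is protoadditive. -/

import Mathlib

namespace MVPaper

/-- An MV-algebra: a set with a binary `⊕`, a unary `¬`, and a constant `0`
satisfying the MV-algebra axioms. -/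
class MV (α : Type*) where
  oplus : α → α → α
  neg : α → α
  zero : α
  oplus_assoc : ∀ x y z : α, oplus x (oplus y z) = oplus (oplus x y) z
  oplus_comm : ∀ x y : α, oplus x y = oplus y x
  oplus_zero : ∀ x : α, oplus x zero = x
  neg_neg : ∀ x : α, neg (neg x) = x
  oplus_neg_zero : ∀ x : α, oplus x (neg zero) = neg zero
  lukasiewicz : ∀ x y : α,
    oplus (neg (oplus (neg x) y)) y = oplus (neg (oplus (neg y) x)) x

namespace MV

variable {α : Type*} [MV α]

/-- `1 := ¬0`. -/
def one : α := neg zero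

/-- `x ⊙ y := ¬(¬x ⊕ ¬y)`. -/
def odot (x y : α) : α := neg (oplus (neg x) (neg y))

/-- `x ⊖ y := ¬(¬x ⊕ y)`. -/
def ominus (x y : α) : α := neg (oplus (neg x) y)

/-- `d(x,y) := (x ⊖ y) ⊕ (y ⊖ x)`. -/
def dist (x y : α) : α := oplus (ominus x y) (ominus y x)

/-- The natural order: `x ≤ y` iff `¬x ⊕ y = 1`. -/
def le (x y : α) : Prop := oplus (neg x) y = one

/-- `x ∨ y := (x ⊖ y) ⊕ y`. -/
def sup (x y : α) : α := oplus (ominus x y) y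

/-- `x ∧ y := x ⊙ (¬x ⊕ y)`. -/
def inf (x y : α) : α := odot x (oplus (neg x) y)

/-- `n · a`, the `n`-fold sum `a ⊕ ⋯ ⊕ a`. -/
def nsmul : ℕ → α → α
  | 0, _ => zero
  | n + 1, a => oplus a (nsmul n a)

end MV

/-- Products of MV-algebras, with componentwise operations. -/
instance prodMV {α β : Type*} [MV α] [MV β] : MV (α × β) where
  oplus x y := (MV.oplus x.1 y.1, MV.oplus x.2 y.2)
  neg x := (MV.neg x.1, MV.neg x.2)
  zero := (MV.zero, MV.zero)
  oplus_assoc x y z :=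
    congrArg₂ Prod.mk (MV.oplus_assoc _ _ _) (MV.oplus_assoc _ _ _)
  oplus_comm x y :=
    congrArg₂ Prod.mk (MV.oplus_comm _ _) (MV.oplus_comm _ _)
  oplus_zero x := by
    obtain ⟨a, b⟩ := x
    exact congrArg₂ Prod.mk (MV.oplus_zero a) (MV.oplus_zero b)
  neg_neg x := by
    obtain ⟨a, b⟩ := x
    exact congrArg₂ Prod.mk (MV.neg_neg a) (MV.neg_neg b)
  oplus_neg_zero x :=
    congrArg₂ Prod.mk (MV.oplus_neg_zero _) (MV.oplus_neg_zero _)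
  lukasiewicz x y :=
    congrArg₂ Prod.mk (MV.lukasiewicz _ _) (MV.lukasiewicz _ _)

/-- A homomorphism of MV-algebras: a map preserving `⊕`, `¬` and `0`. -/
structure IsHom {α β : Type*} [MV α] [MV β] (f : α → β) : Prop where
  map_zero : f MV.zero = MV.zero
  map_oplus : ∀ x y : α, f (MV.oplus x y) = MV.oplus (f x) (f y)
  map_neg : ∀ x : α, f (MV.neg x) = MV.neg (f x)

/-- An ideal of an MV-algebra: contains `0`, closed under `⊕`, downward closed. -/
structure IsIdeal {α : Type*} [MV α] (I : Set α) : Prop where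
  zero_mem : MV.zero ∈ I
  oplus_mem : ∀ ⦃x⦄, x ∈ I → ∀ ⦃y⦄, y ∈ I → MV.oplus x y ∈ I
  lower_mem : ∀ ⦃x⦄, x ∈ I → ∀ ⦃y⦄, MV.le y x → y ∈ I

/-- The kernel of a homomorphism. -/
def ker {α β : Type*} [MV α] [MV β] (f : α → β) : Set α := {x | f x = MV.zero}

/-- The radical of an MV-algebra: `Rad(A) = {a | n·a ≤ ¬a for all n}`
(the intersection of all maximal proper ideals). -/
def Rad (α : Type*) [MV α] : Set α :=
  {a | ∀ n : ℕ, MV.le (MV.nsmul n a) (MV.neg a)}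

/-- `P(A) := Rad(A) ∪ ¬Rad(A)`. -/
def PSet (α : Type*) [MV α] : Set α :=
  Rad α ∪ {x | MV.neg x ∈ Rad α}

/-- An MV-algebra is trivial if `0 = 1`. -/
def IsTrivial (α : Type*) [MV α] : Prop := (MV.zero : α) = MV.one

/-- An MV-algebra is semisimple if its radical is trivial. -/
def Semisimple (α : Type*) [MV α] : Prop := Rad α = ({MV.zero} : Set α)

/-- An MV-algebra is perfect if `A = Rad(A) ∪ ¬Rad(A)`. -/
def Perfect (α : Type*) [MV α] : Prop := ∀ a : α, a ∈ PSet α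

/-- `q : α → Q` realizes `Q` as the quotient of `α` by the ideal `I`,
i.e. by the congruence `x ∼ y ↔ d(x,y) ∈ I`. -/
structure IsQuotientBy {α Q : Type*} [MV α] [MV Q] (I : Set α) (q : α → Q) : Prop where
  hom : IsHom q
  surj : Function.Surjective q
  eq_iff : ∀ x y : α, q x = q y ↔ MV.dist x y ∈ I

namespace MV

variable {α : Type*} [MV α]

theorem neg_oplus_self (x : α) : oplus (neg x) x = one := by
  have h := lukasiewicz x (neg zero)
  rw [oplus_neg_zero, neg_neg, oplus_comm zero, oplus_zero] at h
  exact h.symm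

theorem ominus_self (x : α) : ominus x x = zero := by
  rw [ominus, neg_oplus_self, one, neg_neg]

theorem ominus_zero (x : α) : ominus x zero = x := by
  rw [ominus, oplus_zero, neg_neg]

theorem ominus_ominus_comm (x y : α) : ominus x (ominus x y) = ominus y (ominus y x) := by
  have h := lukasiewicz (neg y) (neg x)
  rw [neg_neg, neg_neg] at h
  unfold ominus
  rw [oplus_comm (neg x), oplus_comm (neg y), oplus_comm (neg x) y, oplus_comm (neg y) x, h]

theorem ominus_oplus_ominus (x y : α) : oplus (ominus y (ominus y x)) (ominus y x) = y := by
  have h : ominus (ominus y x) y = zero := by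
    unfold ominus
    rw [neg_neg, oplus_comm (neg y), ← oplus_assoc, neg_oplus_self, one, oplus_neg_zero, neg_neg]
  have hl : oplus (ominus y (ominus y x)) (ominus y x) = oplus (ominus (ominus y x) y) y :=
    lukasiewicz y (ominus y x)
  rw [hl, h, oplus_comm, oplus_zero]

/-- Subtracting `x ⊖ y` from `x` and then adding `y ⊖ x` gives `y`. -/
theorem oplus_ominus_correct (x y : α) :
    oplus (ominus x (ominus x y)) (ominus y x) = y := by
  rw [ominus_ominus_comm, ominus_oplus_ominus]

end MV

namespace IsHom

variable {α β : Type*} [MV α] [MV β] {f : α → β}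

theorem map_one (hf : IsHom f) : f MV.one = MV.one := by
  rw [MV.one, hf.map_neg, hf.map_zero, MV.one]

theorem map_ominus (hf : IsHom f) (x y : α) :
    f (MV.ominus x y) = MV.ominus (f x) (f y) := by
  simp only [MV.ominus, hf.map_neg, hf.map_oplus]

theorem map_dist (hf : IsHom f) (x y : α) : f (MV.dist x y) = MV.dist (f x) (f y) := by
  simp only [MV.dist, hf.map_oplus, hf.map_ominus]

theorem map_nsmul (hf : IsHom f) (n : ℕ) (x : α) :
    f (MV.nsmul n x) = MV.nsmul n (f x) := by
  induction n with
  | zero => exact hf.map_zero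
  | succ n ih => rw [MV.nsmul, hf.map_oplus, ih, MV.nsmul]

theorem map_mem_Rad (hf : IsHom f) {x : α} (hx : x ∈ Rad α) : f x ∈ Rad β := by
  intro n
  have h := congrArg f (hx n)
  rwa [hf.map_oplus, hf.map_neg, hf.map_neg, hf.map_nsmul, hf.map_one] at h

end IsHom

theorem isHom_fst {α β : Type*} [MV α] [MV β] : IsHom (Prod.fst : α × β → α) :=
  ⟨rfl, fun _ _ => rfl, fun _ => rfl⟩

theorem isHom_snd {α β : Type*} [MV α] [MV β] : IsHom (Prod.snd : α × β → β) :=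
  ⟨rfl, fun _ _ => rfl, fun _ => rfl⟩

/-- The radical of a product is the product of the radicals. -/
theorem mem_Rad_prod {α β : Type*} [MV α] [MV β] {x : α × β} :
    x ∈ Rad (α × β) ↔ x.1 ∈ Rad α ∧ x.2 ∈ Rad β := by
  refine ⟨fun h => ⟨isHom_fst.map_mem_Rad h, isHom_snd.map_mem_Rad h⟩, fun h n => ?_⟩
  refine Prod.ext ?_ ?_
  · change MV.oplus (MV.neg (MV.nsmul n x).1) (MV.neg x.1) = MV.one
    rw [isHom_fst.map_nsmul]
    exact h.1 n
  · change MV.oplus (MV.neg (MV.nsmul n x).2) (MV.neg x.2) = MV.one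
    rw [isHom_snd.map_nsmul]
    exact h.2 n

/-- The semisimplification functor `S` is protoadditive: it preserves pullbacks
along split epimorphisms. If `p : A → B` is a surjective homomorphism with a
homomorphism section `s` (`p ∘ s = id`) and `g : C → B` is any homomorphism,
then the canonical homomorphism
`φ : S(A ×_B C) → {(u,v) ∈ S(A) × S(C) : S(p) u = S(g) v}`, `[(a,c)] ↦ ([a],[c])`,
is an isomorphism (stated here as: on the pullback `A ×_B C`, the map
`(a,c) ↦ (η_A a, η_C c)` identifies elements exactly up to `Rad(A ×_B C)`, and
hits every point of the pullback of `S(p)` along `S(g)`). -/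
theorem S_protoadditive {α β γ SA SB SC : Type*}
    [MV α] [MV β] [MV γ] [MV SA] [MV SB] [MV SC]
    {p : α → β} (hp : IsHom p) (hps : Function.Surjective p)
    {s : β → α} (hs : IsHom s) (hsec : p ∘ s = id)
    {g : γ → β} (hg : IsHom g)
    {ηA : α → SA} (hηA : IsQuotientBy (Rad α) ηA)
    {ηB : β → SB} (hηB : IsQuotientBy (Rad β) ηB)
    {ηC : γ → SC} (hηC : IsQuotientBy (Rad γ) ηC)
    {Sp : SA → SB} (hSp : IsHom Sp) (hSpnat : Sp ∘ ηA = ηB ∘ p)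
    {Sg : SC → SB} (hSg : IsHom Sg) (hSgnat : Sg ∘ ηC = ηB ∘ g) :
    (∀ x y : α × γ, p x.1 = g x.2 → p y.1 = g y.2 →
        (((ηA x.1, ηC x.2) : SA × SC) = (ηA y.1, ηC y.2) ↔
          MV.dist x y ∈ Rad (α × γ))) ∧
    (∀ u : SA, ∀ v : SC, Sp u = Sg v →
        ∃ x : α × γ, p x.1 = g x.2 ∧ ηA x.1 = u ∧ ηC x.2 = v) := by
  refine ⟨fun x y _ _ => ?_, fun u v huv => ?_⟩
  · rw [Prod.mk.injEq, hηA.eq_iff, hηC.eq_iff, mem_Rad_prod]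
    exact Iff.rfl
  · obtain ⟨a, rfl⟩ := hηA.surj u
    obtain ⟨c, rfl⟩ := hηC.surj v
    have hB : ηB (p a) = ηB (g c) :=
      (congrFun hSpnat a).symm.trans (huv.trans (congrFun hSgnat c))
    have hA : ηA (s (p a)) = ηA (s (g c)) := by
      rw [hηA.eq_iff, ← hs.map_dist]
      exact hs.map_mem_Rad ((hηB.eq_iff _ _).1 hB)
    have hps' : ∀ b, p (s b) = b := congrFun hsec
    refine ⟨(MV.oplus (MV.ominus a (s (MV.ominus (p a) (g c)))) (s (MV.ominus (g c) (p a))), c),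
      ?_, ?_, rfl⟩
    · simp only [hp.map_oplus, hp.map_ominus, hps']
      exact MV.oplus_ominus_correct (p a) (g c)
    · simp only [hηA.hom.map_oplus, hηA.hom.map_ominus, hs.map_ominus, hA, MV.ominus_self,
        MV.ominus_zero, MV.oplus_zero]

end MVPaper
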